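/- For all finite Borel measures μ, ρ on E = [0,∞] and all a ≥ 0, r ≥ 0: if r ≤ ⟨ρ,1⟩ then H^{[k_aμ, ρ]}_r = H^μ_a + H^ρ_r (with the convention x + ∞ = ∞ for x ∈ E), and if r ≥ ⟨ρ,1⟩ then H^{[k_aμ, ρ]}_r = H^μ_{a + r − ⟨ρ,1⟩}. -/

import Mathlib

open MeasureTheory Set Filter Topology ENNReal

noncomputable section

/-- `mH ν` is the supremum of the closed support of a Borel measure `ν` on `E = [0,∞]`
(a point is in the support iff every open neighbourhood has positive measure),
with the convention `sSup ∅ = 0`. -/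
def mH (ν : Measure ℝ≥0∞) : ℝ≥0∞ :=
  sSup {x : ℝ≥0∞ | ∀ U : Set ℝ≥0∞, IsOpen U → x ∈ U → 0 < ν U}

/-- The point at which the erased measure `k_a ν` is cut. -/
def eraseCut (ν : Measure ℝ≥0∞) (a : ℝ≥0∞) : ℝ≥0∞ :=
  sInf {s : ℝ≥0∞ | ν Set.univ - a ≤ ν (Set.Iic s)}

/-- The erased measure `k_a ν` : the measure `ν` erased by mass `a` backward from the top.
For a finite measure `ν` it is the unique finite measure satisfying
`eraseMass a ν (Set.Iic s) = min (ν (Set.Iic s)) (ν Set.univ - a)` for all `s`;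
in particular it is `0` as soon as `a ≥ ν Set.univ`. -/
def eraseMass (a : ℝ≥0∞) (ν : Measure ℝ≥0∞) : Measure ℝ≥0∞ :=
  ν.restrict (Set.Iio (eraseCut ν a)) +
    (ν Set.univ - a - ν (Set.Iio (eraseCut ν a))) • Measure.dirac (eraseCut ν a)

/-- `Hr ν r = H^ν_r = H^{k_r ν}`, the height of the measure `ν` erased by mass `r`. -/
def Hr (ν : Measure ℝ≥0∞) (r : ℝ≥0∞) : ℝ≥0∞ := mH (eraseMass r ν)

/-- The concatenation `[μ, ν]` of two finite measures on `E = [0,∞]` :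
`∫ f d[μ,ν] = ∫ f dμ + ∫ f(H^μ + x) ν(dx)`, with the convention `x + ∞ = ∞`
(automatic for `ℝ≥0∞` addition). -/
def concatM (μ ν : Measure ℝ≥0∞) : Measure ℝ≥0∞ :=
  μ + ν.map (fun x => mH μ + x)

/-!
Write `F ν s = ν (Iic s)`. For a finite measure, `F` is right-continuous, so `eraseCut ν a` is the
generalized inverse of `F ν` at the level `ν univ - a`: it is `≤ s` iff `ν univ - a ≤ F ν s`
(`eraseCut_le_iff`). The top of the support is likewise characterized by `mH ν ≤ s` iff
`ν univ ≤ F ν s` (`mH_le_iff`). Since `F (eraseMass a ν) s = min (F ν s) (ν univ - a)`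
(`eraseMass_Iic`), the height `Hr ν a` is just `eraseCut ν a`.

With `H = eraseCut μ a` and `m = μ univ - a`, the concatenation has distribution function
`F μ s < m` below `H`, and `m + ρ {x | H + x ≤ s}` from `H` on (`concatM_Iic_of_lt`,
`concatM_Iic_of_le`). Both identities follow by comparing, for each `s`, the conditions under
which the two sides are `≤ s`, according to whether `s < H` or `H ≤ s`.
-/

/-- The complement of the closed support is null, which is where second countability of `[0,∞]`
enters. -/
lemma mH_le_iff (ν : Measure ℝ≥0∞) [IsFiniteMeasure ν] (s : ℝ≥0∞) :
    mH ν ≤ s ↔ ν univ ≤ ν (Iic s) := by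
  have hadd : ν (Iic s) + ν (Ioi s) = ν univ := by
    rw [← compl_Iic]; exact measure_add_measure_compl measurableSet_Iic
  have hzero : ν univ ≤ ν (Iic s) ↔ ν (Ioi s) = 0 := by
    constructor
    · intro h
      have h' : ν (Iic s) + ν (Ioi s) ≤ ν (Iic s) + 0 := by simpa [hadd] using h
      exact le_zero_iff.mp ((ENNReal.add_le_add_iff_left (measure_ne_top ν _)).mp h')
    · intro h
      rw [← hadd, h, add_zero]
  rw [hzero]
  constructor
  · intro h
    apply measure_null_of_locally_null
    intro x hx
    have hx' : ¬ ∀ U : Set ℝ≥0∞, IsOpen U → x ∈ U → 0 < ν U := fun hU =>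
      absurd ((le_sSup hU : x ≤ mH ν).trans h) (not_le.mpr hx)
    push Not at hx'
    obtain ⟨U, hU, hxU, h0⟩ := hx'
    exact ⟨U, mem_nhdsWithin_of_mem_nhds (hU.mem_nhds hxU), le_zero_iff.mp h0⟩
  · intro h
    refine sSup_le fun x hx => ?_
    by_contra hlt
    exact (hx (Ioi s) isOpen_Ioi (not_le.mp hlt)).ne' h

/-- The infimum defining `eraseCut` is attained, by right-continuity of `s ↦ ν (Iic s)`. -/
lemma le_measure_Iic_eraseCut (ν : Measure ℝ≥0∞) [IsFiniteMeasure ν] (a : ℝ≥0∞) :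
    ν univ - a ≤ ν (Iic (eraseCut ν a)) := by
  set S : Set ℝ≥0∞ := {s | ν univ - a ≤ ν (Iic s)} with hS
  have hne : S.Nonempty := ⟨⊤, by simp [hS]⟩
  obtain ⟨u, hanti, hlim, hmem⟩ := exists_seq_tendsto_sInf hne (OrderBot.bddBelow S)
  have hInter : Iic (eraseCut ν a) = ⋂ n, Iic (u n) := by
    ext x
    simp only [mem_Iic, mem_iInter]
    exact ⟨fun h n => h.trans (sInf_le (hmem n)), fun h => ge_of_tendsto' hlim h⟩
  have hm := tendsto_measure_iInter_atTop (μ := ν) (s := fun n => Iic (u n))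
    (fun n => measurableSet_Iic.nullMeasurableSet)
    (fun i j hij => Iic_subset_Iic.mpr (hanti hij)) ⟨0, measure_ne_top ν _⟩
  rw [hInter]
  exact ge_of_tendsto' hm hmem

lemma eraseCut_le_iff (ν : Measure ℝ≥0∞) [IsFiniteMeasure ν] (a s : ℝ≥0∞) :
    eraseCut ν a ≤ s ↔ ν univ - a ≤ ν (Iic s) :=
  ⟨fun h => (le_measure_Iic_eraseCut ν a).trans (measure_mono (Iic_subset_Iic.mpr h)),
    fun h => sInf_le h⟩

/-- The mass strictly below the cut does not exceed the remaining mass, so the truncated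
subtraction in `eraseMass` is a genuine one. -/
lemma measure_Iio_eraseCut_le (ν : Measure ℝ≥0∞) [IsFiniteMeasure ν] (a : ℝ≥0∞) :
    ν (Iio (eraseCut ν a)) ≤ ν univ - a := by
  rcases eq_or_ne (eraseCut ν a) 0 with h0 | h0
  · rw [h0, ← bot_eq_zero, Iio_bot]; simp
  obtain ⟨u, hmono, hlt, hlim⟩ :=
    exists_seq_strictMono_tendsto' (bot_lt_iff_ne_bot.mpr h0 : (⊥ : ℝ≥0∞) < eraseCut ν a)
  have hUnion : Iio (eraseCut ν a) = ⋃ n, Iic (u n) := by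
    ext x
    simp only [mem_Iio, mem_iUnion, mem_Iic]
    constructor
    · intro h
      obtain ⟨n, hn⟩ := (hlim.eventually_const_lt h).exists
      exact ⟨n, hn.le⟩
    · rintro ⟨n, hn⟩
      exact hn.trans_lt (hlt n).2
  have hm := tendsto_measure_iUnion_atTop (μ := ν) (s := fun n => Iic (u n))
    (fun i j hij => Iic_subset_Iic.mpr (hmono.monotone hij))
  rw [hUnion]
  refine le_of_tendsto' hm fun n => ?_
  have hn := (hlt n).2
  rw [← not_le, eraseCut_le_iff, not_le] at hn
  exact hn.le

lemma eraseMass_Iic (ν : Measure ℝ≥0∞) [IsFiniteMeasure ν] (a s : ℝ≥0∞) :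
    eraseMass a ν (Iic s) = min (ν (Iic s)) (ν univ - a) := by
  rw [eraseMass, Measure.add_apply, Measure.smul_apply, Measure.restrict_apply measurableSet_Iic,
    Measure.dirac_apply' _ measurableSet_Iic, smul_eq_mul]
  rcases lt_or_ge s (eraseCut ν a) with h | h
  · have hF := h
    rw [← not_le, eraseCut_le_iff, not_le] at hF
    have hinter : Iic s ∩ Iio (eraseCut ν a) = Iic s :=
      inter_eq_left.mpr (Iic_subset_Iio.mpr h)
    rw [min_eq_left hF.le, hinter,
      indicator_of_notMem (by simpa using h)]
    simp
  · have hinter : Iic s ∩ Iio (eraseCut ν a) = Iio (eraseCut ν a) :=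
      inter_eq_right.mpr (Iio_subset_Iic h)
    rw [min_eq_right ((eraseCut_le_iff ν a s).mp h), hinter,
      indicator_of_mem (by simpa using h)]
    simpa using add_tsub_cancel_of_le (measure_Iio_eraseCut_le ν a)

lemma eraseMass_univ (ν : Measure ℝ≥0∞) [IsFiniteMeasure ν] (a : ℝ≥0∞) :
    eraseMass a ν univ = ν univ - a := by
  have h := eraseMass_Iic ν a ⊤
  rwa [Iic_top, min_eq_right tsub_le_self] at h

instance isFiniteMeasure_eraseMass (ν : Measure ℝ≥0∞) [IsFiniteMeasure ν] (a : ℝ≥0∞) :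
    IsFiniteMeasure (eraseMass a ν) :=
  ⟨by rw [eraseMass_univ]; exact tsub_le_self.trans_lt (measure_lt_top ν _)⟩

instance isFiniteMeasure_concatM (μ ν : Measure ℝ≥0∞) [IsFiniteMeasure μ] [IsFiniteMeasure ν] :
    IsFiniteMeasure (concatM μ ν) := by
  unfold concatM; infer_instance

lemma Hr_eq_eraseCut (ν : Measure ℝ≥0∞) [IsFiniteMeasure ν] (a : ℝ≥0∞) :
    Hr ν a = eraseCut ν a := by
  refine eq_of_forall_ge_iff fun s => ?_
  rw [Hr, mH_le_iff, eraseCut_le_iff, eraseMass_univ, eraseMass_Iic, le_min_iff]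
  exact and_iff_left le_rfl

lemma concatM_univ (μ ν : Measure ℝ≥0∞) : concatM μ ν univ = μ univ + ν univ := by
  rw [concatM, Measure.add_apply, Measure.map_apply (by fun_prop) MeasurableSet.univ, preimage_univ]

lemma concatM_Iic (μ ν : Measure ℝ≥0∞) (s : ℝ≥0∞) :
    concatM μ ν (Iic s) = μ (Iic s) + ν {x | mH μ + x ≤ s} := by
  rw [concatM, Measure.add_apply, Measure.map_apply (by fun_prop) measurableSet_Iic]
  rfl

lemma concatM_Iic_of_lt (μ ρ : Measure ℝ≥0∞) [IsFiniteMeasure μ] (a s : ℝ≥0∞)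
    (h : s < eraseCut μ a) : concatM (eraseMass a μ) ρ (Iic s) = μ (Iic s) := by
  have hH : mH (eraseMass a μ) = eraseCut μ a := Hr_eq_eraseCut μ a
  have hempty : {x | eraseCut μ a + x ≤ s} = ∅ :=
    eq_empty_of_forall_notMem fun x hx => absurd (le_self_add.trans hx) (not_le.mpr h)
  have hF := h
  rw [← not_le, eraseCut_le_iff, not_le] at hF
  rw [concatM_Iic, hH, hempty, measure_empty, add_zero, eraseMass_Iic, min_eq_left hF.le]

lemma concatM_Iic_of_le (μ ρ : Measure ℝ≥0∞) [IsFiniteMeasure μ] (a s : ℝ≥0∞)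
    (h : eraseCut μ a ≤ s) : concatM (eraseMass a μ) ρ (Iic s)
      = μ univ - a + ρ {x | eraseCut μ a + x ≤ s} := by
  have hH : mH (eraseMass a μ) = eraseCut μ a := Hr_eq_eraseCut μ a
  rw [concatM_Iic, hH, eraseMass_Iic, min_eq_right ((eraseCut_le_iff μ a s).mp h)]

/-- Translating by `H` shifts the cut point by `H`; for `H = ∞` both conditions hold. -/
lemma add_eraseCut_le_iff (ρ : Measure ℝ≥0∞) [IsFiniteMeasure ρ] (H r s : ℝ≥0∞) (h : H ≤ s) :
    H + eraseCut ρ r ≤ s ↔ ρ univ - r ≤ ρ {x | H + x ≤ s} := by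
  rcases eq_or_ne H ⊤ with rfl | hH
  · simp [top_le_iff.mp h]
  · have hcancel (x : ℝ≥0∞) : H + x ≤ s ↔ x ≤ s - H :=
      ((ENNReal.cancel_of_ne hH).le_tsub_iff_left h).symm
    simp only [hcancel]
    exact eraseCut_le_iff ρ r (s - H)

/-- For finite Borel measures `μ, ρ` on `E = [0,∞]` and `a, r ≥ 0` :
if `r ≤ ⟨ρ,1⟩` then `H^{[k_aμ, ρ]}_r = H^μ_a + H^ρ_r` (convention `x + ∞ = ∞`), and if
`r ≥ ⟨ρ,1⟩` then `H^{[k_aμ, ρ]}_r = H^μ_{a + r - ⟨ρ,1⟩}`. -/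
theorem height_concat_eraseMass
    (μ ρ : Measure ℝ≥0∞) [IsFiniteMeasure μ] [IsFiniteMeasure ρ]
    (a r : ℝ) (ha : 0 ≤ a) (hr : 0 ≤ r) :
    (ENNReal.ofReal r ≤ ρ Set.univ →
        Hr (concatM (eraseMass (ENNReal.ofReal a) μ) ρ) (ENNReal.ofReal r)
          = Hr μ (ENNReal.ofReal a) + Hr ρ (ENNReal.ofReal r)) ∧
    (ρ Set.univ ≤ ENNReal.ofReal r →
        Hr (concatM (eraseMass (ENNReal.ofReal a) μ) ρ) (ENNReal.ofReal r)
          = Hr μ (ENNReal.ofReal a + ENNReal.ofReal r - ρ Set.univ)) := by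
  simp only [Hr_eq_eraseCut]
  set A := ENNReal.ofReal a
  set R := ENNReal.ofReal r
  refine ⟨fun hle => eq_of_forall_ge_iff fun s => ?_, fun hle => eq_of_forall_ge_iff fun s => ?_⟩
  · rw [eraseCut_le_iff, concatM_univ, eraseMass_univ,
      (ENNReal.cancel_of_ne ENNReal.ofReal_ne_top : AddLECancellable R).add_tsub_assoc_of_le hle]
    rcases lt_or_ge s (eraseCut μ A) with h | h
    · have hF := h
      rw [← not_le, eraseCut_le_iff, not_le] at hF
      rw [concatM_Iic_of_lt μ ρ A s h]
      exact iff_of_false (not_le.mpr (hF.trans_le le_self_add))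
        fun h' => absurd (le_self_add.trans h') (not_le.mpr h)
    · rw [concatM_Iic_of_le μ ρ A s h, add_eraseCut_le_iff ρ _ R s h]
      exact ENNReal.add_le_add_iff_left (tsub_le_self.trans_lt (measure_lt_top μ _)).ne
  · -- Both levels equal `(μ univ - A) - (R - ρ univ)`, and this is at most `μ univ - A`.
    have hR : R = ρ univ + (R - ρ univ) := (add_tsub_cancel_of_le hle).symm
    have hlevel : μ univ - A + ρ univ - R = μ univ - A - (R - ρ univ) := by
      conv_lhs => rw [hR]
      rw [← tsub_tsub, ENNReal.add_sub_cancel_right (measure_ne_top ρ _)]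
    have hlevel' : μ univ - (A + R - ρ univ) = μ univ - A - (R - ρ univ) := by
      rw [(ENNReal.cancel_of_ne (measure_ne_top ρ univ)).add_tsub_assoc_of_le hle, tsub_tsub]
    rw [eraseCut_le_iff, eraseCut_le_iff, concatM_univ, eraseMass_univ, hlevel, hlevel']
    rcases lt_or_ge s (eraseCut μ A) with h | h
    · rw [concatM_Iic_of_lt μ ρ A s h]
    · rw [concatM_Iic_of_le μ ρ A s h]
      exact iff_of_true (tsub_le_self.trans le_self_add)
        (tsub_le_self.trans ((eraseCut_le_iff μ A s).mp h))
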